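/- If σ is a proper twist on G, then for all p,q ∈ G: σ(p,q)·σ((pq)⁻¹, pq) = σ(q⁻¹,q)·σ(p⁻¹,p)·σ(q⁻¹,p⁻¹). -/

import Mathlib

theorem stmt4 {G : Type*} [Group G] (σ : G → G → ℤ)
    (hval : ∀ p q, σ p q = 1 ∨ σ p q = -1)
    (hproper : ∀ p q : G, σ p q * σ q q⁻¹ = σ (p * q) q⁻¹ ∧ σ p⁻¹ p * σ p q = σ p⁻¹ (p * q)) :
    ∀ p q : G, σ p q * σ (p * q)⁻¹ (p * q) = σ q⁻¹ q * σ p⁻¹ p * σ q⁻¹ p⁻¹ := by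
  have one : ∀ x, σ 1 x = 1 := by
    intro x
    have h := (hproper 1 x).1
    rw [one_mul] at h
    rcases hval x x⁻¹ with h' | h' <;> rw [h'] at h <;> linarith
  have symm : ∀ x, σ x x⁻¹ = σ x⁻¹ x := by
    intro x
    have h := (hproper x⁻¹ x).1
    rw [inv_mul_cancel, one] at h
    rcases hval x x⁻¹ with h' | h' <;> rw [h'] at h ⊢ <;> linarith
  intro p q
  have h1 := (hproper q⁻¹ p⁻¹).1
  have h2 := (hproper (p * q)⁻¹ p).2
  have h3 := (hproper p q).1
  have e : (p * q)⁻¹ * p = q⁻¹ := by group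
  rw [inv_inv, e, symm, ← h3, symm] at h2
  rw [inv_inv, ← mul_inv_rev, ← symm] at h1
  rw [symm] at h1
  have g : σ q⁻¹ q * σ p⁻¹ p * σ q⁻¹ p⁻¹ = σ q⁻¹ q * σ (p * q)⁻¹ p := by
    rw [← h1]; ring
  rw [g]
  rcases hval (p * q)⁻¹ (p * q) with a | a <;> rcases hval (p * q)⁻¹ p with b | b <;>
    rcases hval p q with c | c <;> rw [a, b, c] at h2 <;> rw [a, b, c] <;> linarith
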